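/- If N > R, the activity probability satisfies q ∈ (0, 1], and f(q) > 0, then there exists a unique p* ∈ (0, 1) with h(p*) = 0; moreover h(p) < 0 for p ∈ [0, p*) and h(p) > 0 for p ∈ (p*, 1]. (This p* is the competing probability of the unique symmetric mixed-action Bayesian-Nash equilibrium.) -/

import Mathlib

/-!
A binomial mean `∑ k, C(n, k) p ^ k (1 - p) ^ (n - k) g k` is the image of `(1 - p + p X) ^ n` under
the linear functional `X ^ k ↦ g k`. Substituting `1 - p + p X` for `X` in `1 - q + q X` gives
`1 - p q + p q X`, so independently thinning a binomial variable multiplies its parameters. Two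
consequences: `h p = f (p * q)`, and a binomial mean is strictly increasing in its parameter, since
lowering the parameter from `y` to `t * y` amounts to replacing `g n` by its `t`-thinned mean, which
is at most `g n` when `g` is nondecreasing. Hence `h` increases strictly from `h 0 = 1 - β < 0` to
`h 1 = f q > 0`.
-/

open Finset Polynomial

section Algebra

variable {R M : Type*} [CommRing R] [AddCommGroup M] [Module R M]

/-- The expectation of `g K` for `K` binomially distributed with parameters `n` and `p`. The
parameter may lie in any commutative ring and the values in any module, so that `g` may consist of
the powers of a polynomial variable. -/
noncomputable def binomialMean (n : ℕ) (g : ℕ → M) (p : R) : M :=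
  ∑ k ∈ range (n + 1), (bernsteinPolynomial R n k).eval p • g k

lemma eval_bernsteinPolynomial (n k : ℕ) (p : R) :
    (bernsteinPolynomial R n k).eval p = n.choose k * p ^ k * (1 - p) ^ (n - k) := by
  simp [bernsteinPolynomial]

lemma binomialMean_eq_sum_mul (n : ℕ) (g : ℕ → R) (p : R) :
    binomialMean n g p =
      ∑ k ∈ range (n + 1), (n.choose k : R) * p ^ k * (1 - p) ^ (n - k) * g k := by
  simp only [binomialMean, eval_bernsteinPolynomial, smul_eq_mul]

lemma binomialMean_zero_right (n : ℕ) (g : ℕ → M) : binomialMean n g (0 : R) = g 0 := by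
  simp [binomialMean, bernsteinPolynomial.eval_at_0]

lemma binomialMean_const (n : ℕ) (c : M) (p : R) : binomialMean n (fun _ ↦ c) p = c := by
  simp only [binomialMean, ← sum_smul, ← eval_finsetSum, bernsteinPolynomial.sum, eval_one,
    one_smul]

lemma map_binomialMean {M' : Type*} [AddCommGroup M'] [Module R M'] (L : M →ₗ[R] M')
    (n : ℕ) (g : ℕ → M) (p : R) :
    L (binomialMean n g p) = binomialMean n (fun k ↦ L (g k)) p := by
  simp only [binomialMean, map_sum, map_smul]

lemma binomialMean_pow {A : Type*} [CommRing A] [Algebra R A] (n : ℕ) (x : A) (p : R) :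
    binomialMean n (fun k ↦ x ^ k) p = (algebraMap R A (1 - p) + algebraMap R A p * x) ^ n := by
  rw [add_comm, add_pow]
  refine sum_congr rfl fun k _ ↦ ?_
  simp only [eval_bernsteinPolynomial, Algebra.smul_def, map_mul, map_pow, map_natCast]
  ring

theorem binomialMean_binomialMean (n : ℕ) (g : ℕ → M) (p q : R) :
    binomialMean n (fun j ↦ binomialMean j g p) q = binomialMean n g (p * q) := by
  let L : R[X] →ₗ[R] M := (basisMonomials R).constr R g
  have apply_X_pow (k : ℕ) : L (X ^ k) = g k := by
    simpa [L, X_pow_eq_monomial] using (basisMonomials R).constr_basis R g k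
  have eq_apply_pow (j : ℕ) (r : R) : binomialMean j g r = L ((C (1 - r) + C r * X) ^ j) := by
    simp only [← algebraMap_eq, ← binomialMean_pow, map_binomialMean, apply_X_pow]
  have substitution : C (1 - q) + C q * (C (1 - p) + C p * X) = C (1 - p * q) + C (p * q) * X := by
    simp only [C_sub, C_mul, C_1]
    ring
  simp only [eq_apply_pow, ← map_binomialMean, binomialMean_pow, algebraMap_eq, substitution]

lemma continuous_binomialMean [TopologicalSpace R] [IsTopologicalRing R] [TopologicalSpace M]
    [ContinuousAdd M] [ContinuousSMul R M] (n : ℕ) (g : ℕ → M) :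
    Continuous (binomialMean (R := R) n g) :=
  continuous_finsetSum _ fun _ _ ↦ (Polynomial.continuous _).smul continuous_const

end Algebra

section Order

variable {R M : Type*} [CommRing R] [PartialOrder R]
  [AddCommGroup M] [PartialOrder M] [IsOrderedAddMonoid M] [Module R M]
  {n : ℕ} {g g' : ℕ → M} {p : R}

lemma eval_bernsteinPolynomial_nonneg [IsOrderedRing R] (n k : ℕ) (hp : p ∈ Set.Icc 0 1) :
    0 ≤ (bernsteinPolynomial R n k).eval p := by
  rw [eval_bernsteinPolynomial]
  exact mul_nonneg (mul_nonneg (Nat.cast_nonneg _) (pow_nonneg hp.1 _))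
    (pow_nonneg (sub_nonneg.2 hp.2) _)

lemma binomialMean_le_binomialMean [IsOrderedRing R] [PosSMulMono R M] (hp : p ∈ Set.Icc 0 1)
    (hle : ∀ k ≤ n, g k ≤ g' k) : binomialMean n g p ≤ binomialMean n g' p :=
  sum_le_sum fun k hk ↦ smul_le_smul_of_nonneg_left (hle k (mem_range_succ_iff.1 hk))
    (eval_bernsteinPolynomial_nonneg n k hp)

lemma binomialMean_lt_binomialMean [IsOrderedRing R] [PosSMulStrictMono R M]
    (hp : p ∈ Set.Icc 0 1) (hle : ∀ k ≤ n, g k ≤ g' k) {k : ℕ} (hk : k ≤ n)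
    (hpos : 0 < (bernsteinPolynomial R n k).eval p) (hlt : g k < g' k) :
    binomialMean n g p < binomialMean n g' p :=
  sum_lt_sum
    (fun j hj ↦ smul_le_smul_of_nonneg_left (hle j (mem_range_succ_iff.1 hj))
      (eval_bernsteinPolynomial_nonneg n j hp))
    ⟨k, mem_range_succ_iff.2 hk, smul_lt_smul_of_pos_left hlt hpos⟩

lemma binomialMean_le_last [IsOrderedRing R] [PosSMulMono R M] (hg : MonotoneOn g (Set.Iic n))
    (hp : p ∈ Set.Icc 0 1) : binomialMean n g p ≤ g n :=
  calc
    binomialMean n g p ≤ binomialMean n (fun _ ↦ g n) p :=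
      binomialMean_le_binomialMean hp fun _ hk ↦ hg hk Set.self_mem_Iic hk
    _ = g n := binomialMean_const n (g n) p

lemma binomialMean_lt_last [IsStrictOrderedRing R] [PosSMulStrictMono R M]
    (hg : MonotoneOn g (Set.Iic n)) (hlt : g 0 < g n) (hp : p ∈ Set.Ico 0 1) :
    binomialMean n g p < g n := by
  have weight_zero_pos : 0 < (bernsteinPolynomial R n 0).eval p := by
    simpa [eval_bernsteinPolynomial] using pow_pos (sub_pos.2 hp.2) n
  calc
    binomialMean n g p < binomialMean n (fun _ ↦ g n) p :=
      binomialMean_lt_binomialMean (Set.Ico_subset_Icc_self hp)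
        (fun _ hk ↦ hg hk Set.self_mem_Iic hk) n.zero_le weight_zero_pos hlt
    _ = g n := binomialMean_const n (g n) p

theorem strictMonoOn_binomialMean {𝕜 : Type*} [Field 𝕜] [LinearOrder 𝕜] [IsStrictOrderedRing 𝕜]
    [Module 𝕜 M] [PosSMulStrictMono 𝕜 M] (hg : MonotoneOn g (Set.Iic n)) (hlt : g 0 < g n) :
    StrictMonoOn (binomialMean n g) (Set.Icc (0 : 𝕜) 1) := by
  rintro x ⟨hx, -⟩ y hy hxy
  have hy_pos : 0 < y := hx.trans_lt hxy
  have ratio_mem : x / y ∈ Set.Ico 0 1 := ⟨div_nonneg hx hy_pos.le, (div_lt_one hy_pos).2 hxy⟩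
  have weight_last_pos : 0 < (bernsteinPolynomial 𝕜 n n).eval y := by
    simpa [eval_bernsteinPolynomial] using pow_pos hy_pos n
  calc
    binomialMean n g x = binomialMean n g (x / y * y) := by rw [div_mul_cancel₀ x hy_pos.ne']
    _ = binomialMean n (fun j ↦ binomialMean j g (x / y)) y :=
      (binomialMean_binomialMean n g (x / y) y).symm
    _ < binomialMean n g y :=
      binomialMean_lt_binomialMean hy
        (fun j hj ↦ binomialMean_le_last (hg.mono (Set.Iic_subset_Iic.2 hj))
          (Set.Ico_subset_Icc_self ratio_mem))
        le_rfl weight_last_pos (binomialMean_lt_last hg hlt ratio_mem)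

end Order

theorem exists_crossing_of_strictMonoOn {α δ : Type*} [ConditionallyCompleteLinearOrder α]
    [TopologicalSpace α] [OrderTopology α] [DenselyOrdered α] [LinearOrder δ] [TopologicalSpace δ]
    [OrderClosedTopology δ] {φ : α → δ} {a b : α} {c : δ} (hab : a ≤ b)
    (hmono : StrictMonoOn φ (Set.Icc a b)) (hcont : ContinuousOn φ (Set.Icc a b))
    (ha : φ a < c) (hb : c < φ b) :
    ∃ x ∈ Set.Ioo a b, φ x = c ∧ (∀ y ∈ Set.Ico a x, φ y < c) ∧ (∀ y ∈ Set.Ioc x b, c < φ y) ∧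
      ∀ y ∈ Set.Ioo a b, φ y = c → y = x := by
  obtain ⟨x, hx, rfl⟩ := intermediate_value_Ioo hab hcont ⟨ha, hb⟩
  have hx' := Set.Ioo_subset_Icc_self hx
  exact ⟨x, hx, rfl, fun y hy ↦ hmono ⟨hy.1, hy.2.le.trans hx'.2⟩ hx' hy.2,
    fun y hy ↦ hmono hx' ⟨hx'.1.trans hy.1.le, hy.2⟩ hy.1,
    fun y hy hyx ↦ hmono.injOn (Set.Ioo_subset_Icc_self hy) hx' hyx⟩

theorem exists_crossing_binomialMean_mul {n : ℕ} {g : ℕ → ℝ} {q c : ℝ}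
    (hg : MonotoneOn g (Set.Iic n)) (hq : q ∈ Set.Ioc (0 : ℝ) 1) (g_zero_lt : g 0 < c)
    (lt_mean : c < binomialMean n g q) :
    ∃ x ∈ Set.Ioo (0 : ℝ) 1, binomialMean n g (x * q) = c ∧
      (∀ p ∈ Set.Ico 0 x, binomialMean n g (p * q) < c) ∧
      (∀ p ∈ Set.Ioc x 1, c < binomialMean n g (p * q)) ∧
      ∀ p ∈ Set.Ioo (0 : ℝ) 1, binomialMean n g (p * q) = c → p = x := by
  have g_lt_last : g 0 < g n :=
    (g_zero_lt.trans lt_mean).trans_le (binomialMean_le_last hg ⟨hq.1.le, hq.2⟩)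
  have strictMonoOn_mean : StrictMonoOn (fun p ↦ binomialMean n g (p * q)) (Set.Icc (0 : ℝ) 1) :=
    (strictMonoOn_binomialMean hg g_lt_last).comp
      ((strictMono_mul_right_of_pos hq.1).strictMonoOn _)
      fun p hp ↦ ⟨mul_nonneg hp.1 hq.1.le, mul_le_one₀ hp.2 hq.1.le hq.2⟩
  have continuous_mean : Continuous fun p ↦ binomialMean n g (p * q) :=
    (continuous_binomialMean n g).comp (continuous_mul_const q)
  exact exists_crossing_of_strictMonoOn zero_le_one strictMonoOn_mean
    continuous_mean.continuousOn (by simpa [binomialMean_zero_right] using g_zero_lt)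
    (by simpa using lt_mean)

/-- The expected cost of competing when `k` drivers compete for `R` public spots of cost `1`, the
losers paying `γ`. Only `0 < k` is meaningful: division by zero gives the value `γ` at `k = 0`. -/
noncomputable def competingCost (R : ℕ) (γ : ℝ) (k : ℕ) : ℝ :=
  min 1 ((R : ℝ) / (k : ℝ)) + (1 - min 1 ((R : ℝ) / (k : ℝ))) * γ

lemma competingCost_of_le {R k : ℕ} (γ : ℝ) (hk : 0 < k) (hkR : k ≤ R) :
    competingCost R γ k = 1 := by
  have one_le_div : (1 : ℝ) ≤ R / k := (one_le_div₀ (by positivity)).2 (by exact_mod_cast hkR)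
  simp [competingCost, min_eq_left one_le_div]

lemma monotoneOn_competingCost (R : ℕ) {γ : ℝ} (hγ : 1 ≤ γ) :
    MonotoneOn (competingCost R γ) (Set.Ioi 0) := by
  intro a (ha : 0 < a) b _ hab
  have win_prob_le : min 1 ((R : ℝ) / b) ≤ min 1 ((R : ℝ) / a) := by gcongr
  have cost_eq (k : ℕ) : competingCost R γ k = γ - min 1 ((R : ℝ) / k) * (γ - 1) := by
    rw [competingCost]
    ring
  rw [cost_eq, cost_eq]
  gcongr

/-- If N > R, q ∈ (0,1], and f(q) > 0, then there exists a unique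
p* ∈ (0,1) with h(p*) = 0; moreover h(p) < 0 for p ∈ [0, p*) and h(p) > 0 for
p ∈ (p*, 1]. -/
theorem stmt_18 (N R : ℕ) (hN : 1 < N) (hR : 1 ≤ R)
    (β γ : ℝ) (hβ : 1 < β) (hβγ : β < γ)
    (W : ℕ → ℝ)
    (hW : ∀ k : ℕ, W k = min 1 ((R : ℝ) / (k : ℝ)) + (1 - min 1 ((R : ℝ) / (k : ℝ))) * γ)
    (f : ℝ → ℝ)
    (hf : ∀ p : ℝ, f p = -β + ∑ k ∈ Finset.range N,
      W (k + 1) * ((N - 1).choose k : ℝ) * p ^ k * (1 - p) ^ (N - 1 - k))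
    (q : ℝ) (hq : q ∈ Set.Ioc (0 : ℝ) 1)
    (h : ℝ → ℝ)
    (hh : ∀ p : ℝ, h p = -β + ∑ n ∈ Finset.range N,
      ((N - 1).choose n : ℝ) * q ^ n * (1 - q) ^ (N - 1 - n) *
        ∑ k ∈ Finset.range (n + 1),
          W (k + 1) * (n.choose k : ℝ) * p ^ k * (1 - p) ^ (n - k))
    (hRN : R < N) (hfq : 0 < f q) :
    ∃ pstar : ℝ, pstar ∈ Set.Ioo (0 : ℝ) 1 ∧ h pstar = 0 ∧
      (∀ p ∈ Set.Ico (0 : ℝ) pstar, h p < 0) ∧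
      (∀ p ∈ Set.Ioc pstar (1 : ℝ), 0 < h p) ∧
      (∀ p ∈ Set.Ioo (0 : ℝ) 1, h p = 0 → p = pstar) := by
  obtain ⟨m, rfl⟩ : ∃ m, N = m + 1 := ⟨N - 1, by omega⟩
  obtain rfl : W = competingCost R γ := funext hW
  let g : ℕ → ℝ := fun k ↦ competingCost R γ (k + 1)
  have mean_eq_sum (n : ℕ) (p : ℝ) : binomialMean n g p =
      ∑ k ∈ range (n + 1), g k * (n.choose k : ℝ) * p ^ k * (1 - p) ^ (n - k) := by
    simp only [binomialMean_eq_sum_mul, mul_comm (g _), mul_assoc]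
  have f_eq (p : ℝ) : f p = -β + binomialMean m g p := by
    rw [hf, mean_eq_sum, Nat.add_sub_cancel]
  have h_eq (p : ℝ) : h p = -β + binomialMean m g (p * q) := by
    rw [hh, ← binomialMean_binomialMean, binomialMean_eq_sum_mul, Nat.add_sub_cancel]
    simp only [mean_eq_sum, g]
  have g_mono : Monotone g := fun _ _ hab ↦
    monotoneOn_competingCost R (hβ.trans hβγ).le (Nat.succ_pos _) (Nat.succ_pos _) (by omega)
  have g_zero : g 0 < β := (competingCost_of_le γ one_pos hR).trans_lt hβ
  simp only [h_eq, neg_add_eq_zero, neg_add_lt_iff_lt_add, add_zero, lt_neg_add_iff_lt,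
    eq_comm (a := β)]
  rw [f_eq, lt_neg_add_iff_lt] at hfq
  exact exists_crossing_binomialMean_mul (g_mono.monotoneOn _) hq g_zero hfq
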